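/- arXiv:2303.09157 — 2 statements merged into one kernel-verified Lean document; each statement's English description precedes it below -/
import Mathlib

section
/- Let [a,b] ⊂ ℝ be a compact interval and f : [a,b] → ℝ. Suppose there is a sequence of sets W_i = ⋃_j U_{i,j}, i ∈ ℕ, each an at most countable union of open bounded sets U_{i,j} ⊂ ℝ, such that χ_{W_i}(t) → 1 as i → ∞ for every t ∈ [a,b]. Let A ⊂ [a,b] with L¹([a,b] \ A) = 0. Then for every t₁, t₂ ∈ A with t₁ < t₂, we have |f(t₁) − f(t₂)| ≤ liminf_{i→∞} Σ_j osc_{U_{i,j} ∩ A} f. -/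
/-!
Suppose the claim fails. Then there is `c < |f t₁ - f t₂|` such that `∑ⱼ osc (U i j ∩ A) f < c` for
infinitely many `i`. For each such `i`, the set `Eᵢ = ⋃ⱼ conv (f (U i j ∩ A))` has measure less than
`c`. Continuity of the measure from below then gives a level `s` between `f t₁` and `f t₂` which
lies outside `Eᵢ` for infinitely many `i` (`exists_level`).

For those `i`, `f` stays strictly on one side of `s` on each `U i j ∩ A`. Let `P` (resp. `N`) be the
union of all `U i j` with `f > s` (resp. `f < s`) on `U i j ∩ A`. These open sets cover `[a, b]`,
because every point lies in `Wᵢ = ⋃ⱼ U i j` for all large `i`. Both meet `[t₁, t₂]`, since `s`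
separates `f t₁` and `f t₂`, so by connectedness `P ∩ N ∩ [t₁, t₂]` is nonempty. As `A` has full
measure, it is dense in `[t₁, t₂]`, so `P ∩ N` contains a point of `A`, where both `f > s` and
`f < s`: a contradiction.
-/

open Filter MeasureTheory
open scoped ENNReal

noncomputable section

/-- The oscillation `osc_U f = sup{|f(x) − f(y)| : x, y ∈ U}` of `f` on `U`,
valued in `ℝ≥0∞` (so that `osc_∅ f = 0` and unbounded oscillation is `∞`). -/
def oscOn (f : ℝ → ℝ) (U : Set ℝ) : ℝ≥0∞ :=
  ⨆ x ∈ U, ⨆ y ∈ U, edist (f x) (f y)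

lemma volume_convexHull_image_le (f : ℝ → ℝ) (V : Set ℝ) :
    volume (convexHull ℝ (f '' V)) ≤ oscOn f V := by
  refine (Real.volume_le_diam _).trans ?_
  rw [convexHull_ediam]
  refine Metric.ediam_le ?_
  rintro _ ⟨x, hx, rfl⟩ _ ⟨y, hy, rfl⟩
  exact le_iSup₂_of_le x hx (le_iSup₂_of_le y hy le_rfl)

/-- If `volume (E i) ≤ c` for infinitely many `i`, then a set of measure greater than `c` has a
point that lies outside infinitely many of the `E i`. -/
lemma exists_level (J : Set ℝ) (E : ℕ → Set ℝ) (c : ℝ≥0∞) (hc : c < volume J)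
    (hE : ∃ᶠ i in atTop, volume (E i) ≤ c) :
    ∃ s ∈ J, ∃ᶠ i in atTop, s ∉ E i := by
  by_contra! h
  have hsub : J ⊆ ⋃ k : ℕ, {s | ∀ i ≥ k, s ∈ E i} := by
    intro s hs
    have h1 := h s hs
    rw [eventually_atTop] at h1
    exact Set.mem_iUnion.2 h1
  have hmono : Monotone fun k : ℕ => {s | ∀ i ≥ k, s ∈ E i} :=
    fun k l hkl s hs i hi => hs i (hkl.trans hi)
  refine hc.not_ge ((measure_mono hsub).trans ?_)
  rw [hmono.measure_iUnion]
  refine iSup_le fun k => ?_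
  obtain ⟨i, hi, hvol⟩ := frequently_atTop.1 hE k
  exact (measure_mono (fun s hs => hs i hi : {s | ∀ i ≥ k, s ∈ E i} ⊆ E i)).trans hvol

lemma lt_or_gt_of_notMem_convexHull {f : ℝ → ℝ} {V : Set ℝ} {s : ℝ}
    (hs : s ∉ convexHull ℝ (f '' V)) : (∀ x ∈ V, s < f x) ∨ (∀ x ∈ V, f x < s) := by
  by_contra! h
  obtain ⟨⟨x, hx, hxs⟩, ⟨y, hy, hys⟩⟩ := h
  exact hs ((convex_convexHull ℝ _).ordConnected.out
    (subset_convexHull ℝ _ (Set.mem_image_of_mem f hx))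
    (subset_convexHull ℝ _ (Set.mem_image_of_mem f hy)) ⟨hxs, hys⟩)

/-- A set of full measure in `[a, b]` meets every open set that meets a nondegenerate
subinterval `[t₁, t₂]`. -/
lemma exists_mem_of_isOpen {a b t₁ t₂ : ℝ} {A G : Set ℝ}
    (hAfull : volume (Set.Icc a b \ A) = 0) (h₁ : a ≤ t₁) (h₂ : t₂ ≤ b) (hlt : t₁ < t₂)
    (hG : IsOpen G) (hne : (Set.Icc t₁ t₂ ∩ G).Nonempty) : ∃ x ∈ G, x ∈ A := by
  obtain ⟨t, ht, htG⟩ := hne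
  rw [← closure_Ioo hlt.ne] at ht
  have hne : (G ∩ Set.Ioo t₁ t₂).Nonempty := mem_closure_iff.1 ht G hG htG
  by_contra! h
  refine ((hG.inter isOpen_Ioo).measure_pos volume hne).ne' (measure_mono_null ?_ hAfull)
  exact fun x hx => ⟨⟨h₁.trans hx.2.1.le, hx.2.2.le.trans h₂⟩, h x hx.1⟩

/-- Lemma 4.1: if `W_i = ⋃_j U_{i,j}` are countable unions of bounded open sets whose
characteristic functions tend to `1` pointwise on `[a,b]`, and `A ⊂ [a,b]` has full measure,
then for all `t₁ < t₂` in `A` we have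
`|f(t₁) − f(t₂)| ≤ liminf_i Σ_j osc_{U_{i,j} ∩ A} f`. -/
theorem line_estimate (a b : ℝ) (f : ℝ → ℝ) (U : ℕ → ℕ → Set ℝ)
    (hU_open : ∀ i j, IsOpen (U i j)) (hU_bdd : ∀ i j, Bornology.IsBounded (U i j))
    (hW : ∀ t ∈ Set.Icc a b,
      Tendsto (fun i => (⋃ j, U i j).indicator (fun _ => (1 : ℝ)) t) atTop (nhds 1))
    (A : Set ℝ) (hA : A ⊆ Set.Icc a b) (hAfull : volume (Set.Icc a b \ A) = 0)
    (t₁ t₂ : ℝ) (ht₁ : t₁ ∈ A) (ht₂ : t₂ ∈ A) (hlt : t₁ < t₂) :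
    edist (f t₁) (f t₂) ≤ liminf (fun i => ∑' j, oscOn f (U i j ∩ A)) atTop := by
  by_contra! hcon
  obtain ⟨c, hc₁, hc₂⟩ := exists_between hcon
  have hfreq : ∃ᶠ i in atTop, ∑' j, oscOn f (U i j ∩ A) < c :=
    frequently_lt_of_liminf_lt (by isBoundedDefault) hc₁
  obtain ⟨s, hsJ, hs⟩ := exists_level (Set.uIcc (f t₁) (f t₂))
    (fun i => ⋃ j, convexHull ℝ (f '' (U i j ∩ A))) c
    (by rwa [Real.volume_interval, ← Real.dist_eq, ← edist_dist, edist_comm])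
    (hfreq.mono fun i hi => (measure_iUnion_le _).trans
      ((ENNReal.tsum_le_tsum fun j => volume_convexHull_image_le f _).trans hi.le))
  let P : Set ℝ := ⋃ i, ⋃ j, ⋃ _ : ∀ x ∈ U i j ∩ A, s < f x, U i j
  let N : Set ℝ := ⋃ i, ⋃ j, ⋃ _ : ∀ x ∈ U i j ∩ A, f x < s, U i j
  have hP : IsOpen P :=
    isOpen_iUnion fun i => isOpen_iUnion fun j => isOpen_iUnion fun _ => hU_open i j
  have hN : IsOpen N :=
    isOpen_iUnion fun i => isOpen_iUnion fun j => isOpen_iUnion fun _ => hU_open i j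
  have hPA : ∀ x ∈ P, x ∈ A → s < f x := by
    intro x hx hxA
    simp only [P, Set.mem_iUnion] at hx
    obtain ⟨i, j, h, hxU⟩ := hx
    exact h x ⟨hxU, hxA⟩
  have hNA : ∀ x ∈ N, x ∈ A → f x < s := by
    intro x hx hxA
    simp only [N, Set.mem_iUnion] at hx
    obtain ⟨i, j, h, hxU⟩ := hx
    exact h x ⟨hxU, hxA⟩
  have hcover : Set.Icc a b ⊆ P ∪ N := by
    intro t ht
    -- the indicator is eventually positive, hence `t` is eventually in `⋃ j, U i j`
    have hev := (hW t ht).eventually (lt_mem_nhds one_pos)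
    obtain ⟨i, hsi, hti⟩ := (hs.and_eventually hev).exists
    have htW : t ∈ ⋃ j, U i j := Set.mem_of_indicator_ne_zero hti.ne'
    obtain ⟨j, htj⟩ := Set.mem_iUnion.1 htW
    have hsj : s ∉ convexHull ℝ (f '' (U i j ∩ A)) :=
      fun h => hsi (Set.mem_iUnion.2 ⟨j, h⟩)
    rcases lt_or_gt_of_notMem_convexHull hsj with h | h
    · exact Or.inl (Set.mem_iUnion.2 ⟨i, Set.mem_iUnion.2 ⟨j, Set.mem_iUnion.2 ⟨h, htj⟩⟩⟩)
    · exact Or.inr (Set.mem_iUnion.2 ⟨i, Set.mem_iUnion.2 ⟨j, Set.mem_iUnion.2 ⟨h, htj⟩⟩⟩)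
  have hI : Set.Icc t₁ t₂ ⊆ P ∪ N :=
    (Set.Icc_subset_Icc (hA ht₁).1 (hA ht₂).2).trans hcover
  have hm₁ : t₁ ∈ Set.Icc t₁ t₂ := Set.left_mem_Icc.2 hlt.le
  have hm₂ : t₂ ∈ Set.Icc t₁ t₂ := Set.right_mem_Icc.2 hlt.le
  have hmeet : (Set.Icc t₁ t₂ ∩ P).Nonempty ∧ (Set.Icc t₁ t₂ ∩ N).Nonempty := by
    rcases hI hm₁ with h1 | h1 <;> rcases hI hm₂ with h2 | h2
    · exact absurd hsJ.1 (not_le.2 (lt_min (hPA _ h1 ht₁) (hPA _ h2 ht₂)))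
    · exact ⟨⟨t₁, hm₁, h1⟩, ⟨t₂, hm₂, h2⟩⟩
    · exact ⟨⟨t₂, hm₂, h2⟩, ⟨t₁, hm₁, h1⟩⟩
    · exact absurd hsJ.2 (not_le.2 (max_lt (hNA _ h1 ht₁) (hNA _ h2 ht₂)))
  have hPN := isPreconnected_Icc P N hP hN hI hmeet.1 hmeet.2
  obtain ⟨x, ⟨hxP, hxN⟩, hxA⟩ :=
    exists_mem_of_isOpen hAfull (hA ht₁).1 (hA ht₂).2 hlt (hP.inter hN) hPN
  exact lt_asymm (hPA x hxP hxA) (hNA x hxN hxA)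
end
end

section
/- Let (Y, d_Y) be a metric space, let [a,b] ⊂ ℝ be a compact interval, and let f : [a,b] → Y. Suppose there is a sequence of sets W_i = ⋃_j U_{i,j}, i ∈ ℕ, each an at most countable union of open bounded sets U_{i,j} ⊂ ℝ, such that χ_{W_i}(t) → 1 as i → ∞ for every t ∈ [a,b]. Let A ⊂ [a,b] with L¹([a,b] \ A) = 0. Then for every t₁, t₂ ∈ A with t₁ < t₂, we have d_Y(f(t₁), f(t₂)) ≤ liminf_{i→∞} Σ_j diam f(U_{i,j} ∩ A), where diam denotes the diameter in (Y, d_Y) (with diam ∅ := 0). -/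
/-!
Put `g t = d(f t₁, f t)`. This is a real function which is `0` at `t₁` and `d(f t₁, f t₂)` at
`t₂`, and `diam g(S) ≤ diam f(S)` for every `S`. Let `E i` be the union over `j` of the intervals
`convexHull ℝ (g '' (U i j ∩ A))`, so that `volume (E i) ≤ ∑ j, diam f(U i j ∩ A)`.

Every level `s` strictly between `0` and `d(f t₁, f t₂)` lies in `E i` for all large `i`: since
`A` is dense in `[a, b]`, the closures of `A ∩ {g ≤ s}` and `A ∩ {s ≤ g}` cover the connected set
`[t₁, t₂]`, hence share a point `t` of it (`exists_mem_closure_le_ge`). For large `i` the point `t`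
lies in some `U i j`, and this open set then meets both parts of `A`, so `s` lies in the convex
hull of `g (U i j ∩ A)`. By Fatou's lemma,
`d(f t₁, f t₂) = volume (0, d(f t₁, f t₂)) ≤ liminf volume (E i)`, which is the claim.
-/

open Filter MeasureTheory
open scoped ENNReal

noncomputable section

theorem Icc_subset_closure_of_full_measure {a b : ℝ} (hab : a < b) {A : Set ℝ}
    (hAfull : volume (Set.Icc a b \ A) = 0) : Set.Icc a b ⊆ closure A := by
  rw [← closure_Ioo hab.ne]
  refine closure_minimal (fun x hx => ?_) isClosed_closure
  by_contra hxA
  have hopen : IsOpen (Set.Ioo a b ∩ (closure A)ᶜ) := isOpen_Ioo.inter isClosed_closure.isOpen_compl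
  refine (hopen.measure_pos volume ⟨x, hx, hxA⟩).ne' (measure_mono_null ?_ hAfull)
  exact fun y hy => ⟨Set.Ioo_subset_Icc_self hy.1, fun h => hy.2 (subset_closure h)⟩

/-- A substitute for the intermediate value theorem for a function without any continuity: a level
`s` between `g t₁` and `g t₂` is straddled by `g` on `A` near some point of `[t₁, t₂]`. -/
theorem exists_mem_closure_le_ge {A : Set ℝ} {g : ℝ → ℝ} {t₁ t₂ s : ℝ} (hlt : t₁ < t₂)
    (hdense : Set.Icc t₁ t₂ ⊆ closure A) (ht₁ : t₁ ∈ A) (ht₂ : t₂ ∈ A)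
    (h₁ : g t₁ ≤ s) (h₂ : s ≤ g t₂) :
    ∃ t ∈ Set.Icc t₁ t₂, t ∈ closure (A ∩ {x | g x ≤ s}) ∧ t ∈ closure (A ∩ {x | s ≤ g x}) := by
  have hcover : Set.Icc t₁ t₂ ⊆ closure (A ∩ {x | g x ≤ s}) ∪ closure (A ∩ {x | s ≤ g x}) := by
    rw [← closure_union]
    refine hdense.trans (closure_mono fun x hx => ?_)
    exact (le_total (g x) s).imp (fun h => ⟨hx, h⟩) (fun h => ⟨hx, h⟩)
  obtain ⟨t, ht, htP, htQ⟩ := isPreconnected_closed_iff.1 isPreconnected_Icc _ _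
    isClosed_closure isClosed_closure hcover
    ⟨t₁, Set.left_mem_Icc.2 hlt.le, subset_closure ⟨ht₁, h₁⟩⟩
    ⟨t₂, Set.right_mem_Icc.2 hlt.le, subset_closure ⟨ht₂, h₂⟩⟩
  exact ⟨t, ht, htP, htQ⟩

/-- Fatou's lemma for sets. -/
theorem measure_le_liminf_of_eventually_mem {α : Type*} [MeasurableSpace α] (μ : Measure α)
    {S : Set α} {E : ℕ → Set α} (hS : MeasurableSet S) (hE : ∀ i, MeasurableSet (E i))
    (h : ∀ s ∈ S, ∀ᶠ i in atTop, s ∈ E i) : μ S ≤ liminf (fun i => μ (E i)) atTop := by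
  calc μ S = ∫⁻ x, S.indicator 1 x ∂μ := (lintegral_indicator_one hS).symm
    _ ≤ ∫⁻ x, liminf (fun i => (E i).indicator (1 : α → ℝ≥0∞) x) atTop ∂μ := by
        refine lintegral_mono fun x => ?_
        by_cases hx : x ∈ S
        · refine le_liminf_of_le (by isBoundedDefault) ?_
          filter_upwards [h x hx] with i hi
          simp [hx, hi]
        · simp [hx]
    _ ≤ liminf (fun i => ∫⁻ x, (E i).indicator (1 : α → ℝ≥0∞) x ∂μ) atTop :=
        lintegral_liminf_le fun i => measurable_one.indicator (hE i)
    _ = liminf (fun i => μ (E i)) atTop := by simp only [lintegral_indicator_one (hE _)]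

theorem volume_convexHull_image_dist_le {Y : Type*} [MetricSpace Y] (y : Y) (f : ℝ → Y)
    (S : Set ℝ) :
    volume (convexHull ℝ ((fun t => dist y (f t)) '' S)) ≤ Metric.ediam (f '' S) := by
  refine (Real.volume_le_diam _).trans ?_
  rw [convexHull_ediam, Set.image_image (dist y) f S |>.symm]
  simpa using (LipschitzWith.dist_right y).ediam_image_le _

/-- Lemma 4.2: let `f : [a,b] → Y` be a mapping into a metric space. If
`W_i = ⋃_j U_{i,j}` are countable unions of bounded open sets whose characteristic
functions tend to `1` pointwise on `[a,b]`, and `A ⊂ [a,b]` has full measure, then for all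
`t₁ < t₂` in `A` we have `d_Y(f(t₁), f(t₂)) ≤ liminf_i Σ_j diam f(U_{i,j} ∩ A)`. -/
theorem line_behavior {Y : Type*} [MetricSpace Y]
    (a b : ℝ) (f : ℝ → Y) (U : ℕ → ℕ → Set ℝ)
    (hU_open : ∀ i j, IsOpen (U i j)) (hU_bdd : ∀ i j, Bornology.IsBounded (U i j))
    (hW : ∀ t ∈ Set.Icc a b,
      Tendsto (fun i => (⋃ j, U i j).indicator (fun _ => (1 : ℝ)) t) atTop (nhds 1))
    (A : Set ℝ) (hA : A ⊆ Set.Icc a b) (hAfull : volume (Set.Icc a b \ A) = 0)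
    (t₁ t₂ : ℝ) (ht₁ : t₁ ∈ A) (ht₂ : t₂ ∈ A) (hlt : t₁ < t₂) :
    edist (f t₁) (f t₂) ≤ liminf (fun i => ∑' j, EMetric.diam (f '' (U i j ∩ A))) atTop := by
  set g : ℝ → ℝ := fun t => dist (f t₁) (f t) with hg
  set E : ℕ → Set ℝ := fun i => ⋃ j, convexHull ℝ (g '' (U i j ∩ A)) with hE
  have hEmeas : ∀ i, MeasurableSet (E i) := fun i =>
    MeasurableSet.iUnion fun j => (convex_convexHull ℝ _).ordConnected.measurableSet
  have hab : a < b := (hA ht₁).1.trans_lt (hlt.trans_le (hA ht₂).2)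
  have hsub : Set.Icc t₁ t₂ ⊆ Set.Icc a b := Set.Icc_subset_Icc (hA ht₁).1 (hA ht₂).2
  have hdense := hsub.trans (Icc_subset_closure_of_full_measure hab hAfull)
  have hmem : ∀ s ∈ Set.Ioo 0 (g t₂), ∀ᶠ i in atTop, s ∈ E i := by
    intro s hs
    obtain ⟨t, ht, htP, htQ⟩ := exists_mem_closure_le_ge (g := g) hlt hdense ht₁ ht₂
      (by simpa [hg] using hs.1.le) hs.2.le
    -- A value of the characteristic function which is positive is `1`.
    filter_upwards [(hW t (hsub ht)).eventually (lt_mem_nhds zero_lt_one)] with i hi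
    obtain ⟨j, hj⟩ := Set.mem_iUnion.1 (Set.mem_of_indicator_ne_zero hi.ne')
    obtain ⟨x, hxU, hxA, hxs⟩ := mem_closure_iff.1 htP _ (hU_open i j) hj
    obtain ⟨y, hyU, hyA, hys⟩ := mem_closure_iff.1 htQ _ (hU_open i j) hj
    have hx : g x ∈ g '' (U i j ∩ A) := Set.mem_image_of_mem g ⟨hxU, hxA⟩
    have hy : g y ∈ g '' (U i j ∩ A) := Set.mem_image_of_mem g ⟨hyU, hyA⟩
    exact Set.mem_iUnion.2 ⟨j, (convex_convexHull ℝ _).ordConnected.out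
      (subset_convexHull ℝ _ hx)
      (subset_convexHull ℝ _ hy) ⟨hxs, hys⟩⟩
  calc edist (f t₁) (f t₂) = volume (Set.Ioo 0 (g t₂)) := by
        rw [Real.volume_Ioo, sub_zero, edist_dist]
    _ ≤ liminf (fun i => volume (E i)) atTop :=
        measure_le_liminf_of_eventually_mem volume measurableSet_Ioo hEmeas hmem
    _ ≤ _ := liminf_le_liminf (Eventually.of_forall fun i =>
        (measure_iUnion_le _).trans
          (ENNReal.tsum_le_tsum fun j => volume_convexHull_image_dist_le (f t₁) f _))
end
end
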